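/- For every integer N ≥ 2 and all distinct k, l ∈ {1,…,N}, there exist an integer M ≤ 96·N² + 400·N − 400 and real rotation angles such that the (N+4)-qubit Ry-CNOT ansatz circuit of depth M with those angles equals exactly the unitary acting as CNOT_{k,l} (control qubit k, target qubit l) on qubits 1,…,N and as the identity on qubits N+1,…,N+4. -/

import Mathlib

/-!
The CNOT is a product of four rotations about commuting real Pauli strings. Let `J = X₀ Z₀` be
the (real) `Y`-string on the last qubit, which is an ancilla, `A = Z_c` the `Z` on the control and
`B = X_t` the `X` on the target. Then `J² = -1`, `A² = B² = 1`, and (`four_factors`,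
`cnot_eq_rots`)

`(1 + J) (1 - J A) (1 - J B) (1 + J A B) / 4 = (1 + A + B - A B) / 2 = CNOT`.

Each factor, divided by `√2`, is a quarter-turn about `J`, `J A`, `J B` or `J A B`, so it suffices
to realise rotations about these four strings at depth linear in `N` times the period of the ladder.

A Pauli string `X^v Z^φ` is recorded by a bit string `v` and a linear functional `φ`; it generates
rotations when `φ v = 1`. Rotations about `Y_q` are single rotation layers. The ladder is a
unipotent linear map of bit strings, so some power of two `period n ≤ 2 (n - 1)` is a multiple of
its order (`lad_pow_period`); conjugating by `t` ladders therefore costs exactly one period. Further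
strings arise by conjugating with quarter-turns: if the strings `P` and `R` anticommute, the
rotation about `R P` is obtained from that about `P` and two quarter-turns about `R`
(`Good.conj`).

The `Z`-part of the image of `Y₀` under any number of ladders is again `Z₀`, while the `X`-part
can be made to end at any prescribed data qubit (`exists_top`). Multiplying by such strings writes
an arbitrary `X`-string on the data qubits, one qubit at a time, while the `Z`-part stays on the
four ancillas (`good_exists`). Two things have to be arranged there: each multiplication needs an
anticommuting pair, and the ancilla string left over has to be turned into `Y₀` at the end. Both
are questions about the odd Pauli strings on four qubits only, connected by multiplication with the
`Y_p` (free) and with four strings `Y₀X₁X₂`, `Y₀X₂X₃`, `Z₀Y₁X₂`, `Z₀Z₁Y₂X₃` (one period each). They are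
settled by a breadth-first search on this finite graph (`ball_anti`, `ball_Y0`), whose outcome is
evaluated in the kernel. Finally `Z_c` is attached by a free conjugation with `Y_c`.
-/


open Complex

noncomputable section

/-- Basis states of `N` qubits: bit strings of length `N` (qubit `k` (1-based) ↦ index `k-1`). -/
abbrev QState (N : ℕ) := Fin N → ZMod 2

/-- Operators on `(ℂ²)^{⊗N}`, as matrices in the computational basis. -/
abbrev QOp (N : ℕ) := Matrix (QState N) (QState N) ℂ

/-- Ry(θ) = [[cos(θ/2), −sin(θ/2)], [sin(θ/2), cos(θ/2)]]. -/
def RyM (θ : ℝ) : Matrix (ZMod 2) (ZMod 2) ℂ :=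
  Matrix.of fun a b =>
    if a = 0 then (if b = 0 then ((Real.cos (θ/2) : ℝ) : ℂ) else -((Real.sin (θ/2) : ℝ) : ℂ))
    else (if b = 0 then ((Real.sin (θ/2) : ℝ) : ℂ) else ((Real.cos (θ/2) : ℝ) : ℂ))

/-- Rz(θ) = diag(e^{−iθ/2}, e^{iθ/2}). -/
def RzM (θ : ℝ) : Matrix (ZMod 2) (ZMod 2) ℂ :=
  Matrix.of fun a b =>
    if a = b then
      (if a = 0 then Complex.exp (-(θ/2 : ℝ) * Complex.I) else Complex.exp ((θ/2 : ℝ) * Complex.I))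
    else 0

/-- Hadamard gate. -/
def HM : Matrix (ZMod 2) (ZMod 2) ℂ :=
  Matrix.of fun a b => (1 / ((Real.sqrt 2 : ℝ) : ℂ)) * (if a = 1 ∧ b = 1 then -1 else 1)

/-- T gate = diag(1, e^{iπ/4}). -/
def TM : Matrix (ZMod 2) (ZMod 2) ℂ :=
  Matrix.of fun a b =>
    if a = b then (if a = 0 then 1 else Complex.exp ((Real.pi/4 : ℝ) * Complex.I)) else 0

/-- S gate = diag(1, i). -/
def SM : Matrix (ZMod 2) (ZMod 2) ℂ :=
  Matrix.of fun a b => if a = b then (if a = 0 then 1 else Complex.I) else 0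

/-- S† gate = diag(1, −i). -/
def SdgM : Matrix (ZMod 2) (ZMod 2) ℂ :=
  Matrix.of fun a b => if a = b then (if a = 0 then 1 else -Complex.I) else 0

/-- Pauli X gate. -/
def XM : Matrix (ZMod 2) (ZMod 2) ℂ :=
  Matrix.of fun a b => if a = b then 0 else 1

/-- A single-qubit gate `g` acting on qubit with 0-based index `k`, identity elsewhere. -/
def gate1 {N : ℕ} (g : Matrix (ZMod 2) (ZMod 2) ℂ) (k : Fin N) : QOp N :=
  Matrix.of fun x y => if ∀ j, j ≠ k → x j = y j then g (x k) (y k) else 0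

/-- CZ gate on (0-based) qubits `k`, `l`. -/
def CZg {N : ℕ} (k l : Fin N) : QOp N :=
  Matrix.of fun x y => if x = y then (if x k = 1 ∧ x l = 1 then (-1 : ℂ) else 1) else 0

/-- CNOT gate with control `c` and target `t` (0-based): |y⟩ ↦ |y with bit t replaced by y t + y c⟩. -/
def CNOTg {N : ℕ} (c t : Fin N) : QOp N :=
  Matrix.of fun x y => if x = Function.update y t (y t + y c) then (1 : ℂ) else 0

/-- The `k`-th bit (0-based) of a basis state, `0` when out of range. -/
def bitAt {N : ℕ} (x : QState N) (k : ℕ) : ZMod 2 :=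
  if h : k < N then x ⟨k, h⟩ else 0

/-- Ladder of CZ gates: `∏_{k=1}^{N−1} CZ_{k,k+1}` (all factors commute, so it is
the diagonal matrix with entry `(−1)^{#{adjacent 11 pairs}}`). -/
def ladderCZ (N : ℕ) : QOp N :=
  Matrix.of fun x y =>
    if x = y then
      ∏ k ∈ Finset.range (N - 1), (if bitAt x k = 1 ∧ bitAt x (k + 1) = 1 then (-1 : ℂ) else 1)
    else 0

/-- First CNOT layer of the ladder: simultaneous CNOT_{k+1,k} for 1-based `k ∈ {1,…,N−1}`,
`k ≢ N (mod 2)` (control qubit `k+1`, target qubit `k`; disjoint pairs). -/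
def layer1Map (N : ℕ) (y : QState N) : QState N :=
  fun i => if (i : ℕ) + 1 < N ∧ ((i : ℕ) + 1) % 2 ≠ N % 2 then y i + bitAt y ((i : ℕ) + 1) else y i

/-- Second CNOT layer of the ladder: simultaneous CNOT_{k+1,k} for 1-based `k ∈ {1,…,N−1}`,
`k ≡ N (mod 2)`. -/
def layer2Map (N : ℕ) (y : QState N) : QState N :=
  fun i => if (i : ℕ) + 1 < N ∧ ((i : ℕ) + 1) % 2 = N % 2 then y i + bitAt y ((i : ℕ) + 1) else y i

/-- Ladder of CNOT gates: `L₂ · L₁` with `L₁` applied first. It is a permutation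
matrix of the composed bit-string map. -/
def ladderCNOT (N : ℕ) : QOp N :=
  Matrix.of fun x y => if x = layer2Map N (layer1Map N y) then (1 : ℂ) else 0

/-- Rotation layer `⊗_{k} Rz(β_k)·Ry(α_k)`. -/
def rotYZ {N : ℕ} (α β : Fin N → ℝ) : QOp N :=
  Matrix.of fun x y => ∏ k : Fin N, (RzM (β k) * RyM (α k)) (x k) (y k)

/-- The Ry-Rz-CZ ansatz of depth `M`:
`R_M · Ladder_CZ · R_{M−1} ⋯ Ladder_CZ · R_0` (`R_0` applied first), with
rotation layer `i` using angles `α i`, `β i`. -/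
def ansatzYZ (N : ℕ) (α β : ℕ → Fin N → ℝ) : ℕ → QOp N
  | 0 => rotYZ (α 0) (β 0)
  | (M + 1) => rotYZ (α (M + 1)) (β (M + 1)) * ladderCZ N * ansatzYZ N α β M

/-- Rotation layer `⊗_{k} Ry(α_k)`. -/
def rotY {N : ℕ} (α : Fin N → ℝ) : QOp N :=
  Matrix.of fun x y => ∏ k : Fin N, RyM (α k) (x k) (y k)

/-- The Ry-CNOT ansatz of depth `M`:
`R_M · Ladder_CNOT · R_{M−1} ⋯ Ladder_CNOT · R_0` (`R_0` applied first). -/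
def ansatzY (N : ℕ) (α : ℕ → Fin N → ℝ) : ℕ → QOp N
  | 0 => rotY (α 0)
  | (M + 1) => rotY (α (M + 1)) * ladderCNOT N * ansatzY N α M

/-- Product of CZ gates `CZ_{q,q+1}` (1-based qubits) over all `q` satisfying `P`
(a diagonal matrix, since all CZ's commute). -/
def czLayer (N : ℕ) (P : ℕ → Prop) [DecidablePred P] : QOp N :=
  Matrix.of fun x y =>
    if x = y then
      ∏ p ∈ Finset.range N,
        (if P (p + 1) ∧ bitAt x p = 1 ∧ bitAt x (p + 1) = 1 then (-1 : ℂ) else 1)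
    else 0

/-- Hadamard gates on all 1-based qubits `q` satisfying `P`, identity elsewhere. -/
def hadOn (N : ℕ) (P : ℕ → Prop) [DecidablePred P] : QOp N :=
  Matrix.of fun x y =>
    ∏ k : Fin N, (if P ((k : ℕ) + 1) then HM (x k) (y k) else if x k = y k then (1 : ℂ) else 0)

/-- The circuit `D_k` (1-based qubits, rightmost factor applied first):
`D_{2i} = (∏_{j=1}^{i−1} CZ_{2j,2j+1}) · (∏_{q=2}^{2i} H_q) · (∏_{j=1}^{i} CZ_{2j−1,2j})`,
`D_{2i+1} = (∏_{j=1}^{i} CZ_{2j,2j+1}) · (∏_{q=2}^{2i+1} H_q) · (∏_{j=1}^{i} CZ_{2j−1,2j})`. -/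
def Dgate (N k : ℕ) : QOp N :=
  czLayer N (fun p => p % 2 = 0 ∧ 2 ≤ p ∧ p ≤ k - 1) *
    hadOn N (fun q => 2 ≤ q ∧ q ≤ k) *
    czLayer N (fun p => p % 2 = 1 ∧ p ≤ k - 1)

/-- `U ⊗ I`: the operator acting as `U` on qubits `1,…,N` and identity on `A` ancilla qubits. -/
def embed (N A : ℕ) (U : QOp N) : QOp (N + A) :=
  Matrix.of fun x y =>
    U (fun i => x (Fin.castAdd A i)) (fun i => y (Fin.castAdd A i)) *
      (if ∀ i : Fin A, x (Fin.natAdd N i) = y (Fin.natAdd N i) then (1 : ℂ) else 0)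

end

namespace RyCNOT

open Matrix

noncomputable section

variable {n : ℕ}

/-! ### Monomial operators and real Pauli strings -/

/-- The operator `|y⟩ ↦ s(y) |f(y)⟩`. -/
def mono (f : QState n → QState n) (s : QState n → ℂ) : QOp n :=
  Matrix.of fun x y => if x = f y then s y else 0

theorem mono_mul (f g : QState n → QState n) (s r : QState n → ℂ) :
    mono f s * mono g r = mono (fun y => f (g y)) (fun y => s (g y) * r y) := by
  ext x y
  simp [mono, Matrix.mul_apply]

theorem mono_one : mono (n := n) (fun y => y) (fun _ => 1) = 1 := by
  ext x y
  simp [mono, Matrix.one_apply]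

/-- The sign character `a ↦ (-1)^a` of `ZMod 2`. -/
def sgn (a : ZMod 2) : ℂ := if a = 0 then 1 else -1

theorem sgn_add (a b : ZMod 2) : sgn (a + b) = sgn a * sgn b := by
  have h : (1 : ZMod 2) + 1 = 0 := by decide
  have h0 : a = 0 ∨ a = 1 := by revert a; decide
  have h1 : b = 0 ∨ b = 1 := by revert b; decide
  rcases h0 with rfl | rfl <;> rcases h1 with rfl | rfl <;> simp [sgn, h]

@[simp] theorem sgn_zero : sgn 0 = 1 := by simp [sgn]

@[simp] theorem sgn_one : sgn 1 = -1 := by simp [sgn]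

theorem zmod2_cases (a : ZMod 2) : a = 0 ∨ a = 1 := by
  revert a; decide

theorem add_self_zmod2 (a : ZMod 2) : a + a = 0 := by
  revert a; decide

/-- The real Pauli string `X^v Z^φ : |y⟩ ↦ (-1)^{φ(y)} |y + v⟩`. The `Z`-part is recorded as a
linear functional, so that conjugation by a linear reversible circuit is plain composition. -/
def pauli (v : QState n) (φ : Module.Dual (ZMod 2) (QState n)) : QOp n :=
  mono (fun y => y + v) (fun y => sgn (φ y))

theorem pauli_mul (v w : QState n) (φ ψ : Module.Dual (ZMod 2) (QState n)) :
    pauli v φ * pauli w ψ = sgn (φ w) • pauli (v + w) (φ + ψ) := by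
  rw [pauli, pauli, mono_mul]
  ext x y
  simp only [mono, pauli, Matrix.smul_apply, Matrix.of_apply, map_add, sgn_add,
    LinearMap.add_apply, smul_eq_mul, mul_ite, mul_zero]
  congr 1
  · rw [add_assoc, add_comm w v]
  · ring

theorem pauli_zero : pauli (n := n) 0 0 = 1 := by
  simp [pauli, ← mono_one]

theorem add_self_state (v : QState n) : v + v = 0 := by
  ext i; exact add_self_zmod2 _

theorem add_self_dual (φ : Module.Dual (ZMod 2) (QState n)) : φ + φ = 0 := by
  ext i; exact add_self_zmod2 _

theorem pauli_sq (v : QState n) (φ : Module.Dual (ZMod 2) (QState n)) :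
    pauli v φ * pauli v φ = sgn (φ v) • 1 := by
  rw [pauli_mul, add_self_state, add_self_dual, pauli_zero]

/-- The rotation `exp(θ P) = cos θ + sin θ · P` generated by the Pauli string `P = X^v Z^φ`
(a rotation when `φ(v) = 1`, that is, when `P² = -1`). -/
def rot (θ : ℝ) (v : QState n) (φ : Module.Dual (ZMod 2) (QState n)) : QOp n :=
  ((Real.cos θ : ℝ) : ℂ) • 1 + ((Real.sin θ : ℝ) : ℂ) • pauli v φ

/-- Conjugating the rotation about `P` by the quarter-turn about an anticommuting `R` gives the
rotation about `R P`, which is the Pauli string of the sum up to sign. -/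
theorem rot_conj (θ : ℝ) (v w : QState n) (φ ψ : Module.Dual (ZMod 2) (QState n))
    (hw : ψ w = 1) (h : φ w + ψ v = 1) :
    rot (Real.pi / 4) w ψ * rot θ v φ * rot (-(Real.pi / 4)) w ψ =
      rot θ v φ - ((Real.sin θ : ℝ) : ℂ) • pauli v φ +
        ((Real.sin θ : ℝ) : ℂ) • (sgn (ψ v) • pauli (v + w) (φ + ψ)) := by
  set P := pauli v φ with hP
  set R := pauli w ψ with hR
  have hRR : R * R = -1 := by rw [hR, pauli_sq, hw]; simp
  have hRP : R * P = sgn (ψ v) • pauli (v + w) (φ + ψ) := by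
    rw [hR, hP, pauli_mul, add_comm w v, add_comm ψ φ]
  have hPR : P * R = -(R * P) := by
    rw [hRP, hR, hP, pauli_mul, ← neg_smul]
    congr 1
    have h2 : φ w = 1 + ψ v := by
      rw [← h, add_assoc, add_self_zmod2, add_zero]
    rw [h2, sgn_add]; simp
  have hRPR : R * P * R = P := by
    rw [mul_assoc, hPR, mul_neg, ← mul_assoc, hRR]; simp
  have hc : ((Real.cos (Real.pi / 4) : ℝ) : ℂ) * ((Real.cos (Real.pi / 4) : ℝ) : ℂ) = 1 / 2 := by
    rw [← Complex.ofReal_mul, Real.cos_pi_div_four, div_mul_div_comm, Real.mul_self_sqrt (by norm_num)]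
    push_cast; norm_num
  have hs : Real.sin (Real.pi / 4) = Real.cos (Real.pi / 4) := by
    rw [Real.cos_pi_div_four, Real.sin_pi_div_four]
  rw [rot, rot, rot, ← hP, ← hR, Real.cos_neg, Real.sin_neg, hs, ← hRP]
  set c : ℂ := ((Real.cos (Real.pi / 4) : ℝ) : ℂ)
  set a : ℂ := ((Real.cos θ : ℝ) : ℂ)
  set b : ℂ := ((Real.sin θ : ℝ) : ℂ)
  have e1 : (c • (1 : QOp n) + c • R) * (a • 1 + b • P) * (c • 1 + ((-Real.cos (Real.pi / 4) : ℝ) : ℂ) • R)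
      = (c * c) • ((1 + R) * (a • 1 + b • P) * (1 - R)) := by
    have : ((-Real.cos (Real.pi / 4) : ℝ) : ℂ) = -c := Complex.ofReal_neg _
    rw [this, ← smul_add, neg_smul, ← sub_eq_add_neg, ← smul_sub]
    simp only [smul_mul_assoc, mul_smul_comm, smul_smul]
  have e2 : (1 + R) * (a • 1 + b • P) * (1 - R) = (2 : ℂ) • (a • (1 : QOp n) + b • (R * P)) := by
    have : (1 + R) * (a • 1 + b • P) * (1 - R)
        = a • (1 - R * R) + b • (P - P * R + R * P - R * P * R) := by
      simp only [add_mul, mul_add, mul_sub, one_mul, mul_one, smul_mul_assoc, mul_smul_comm,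
        smul_sub, smul_add]
      abel
    rw [this, hRR, hPR, hRPR]
    simp only [smul_add, smul_smul, smul_sub, smul_neg, two_mul]
    module
  rw [e1, e2, hc, smul_smul]
  simp only [smul_add, smul_smul]
  norm_num

/-- The sign in `rot_conj` is absorbed into the angle. -/
theorem rot_conj' (θ : ℝ) (v w : QState n) (φ ψ : Module.Dual (ZMod 2) (QState n))
    (hw : ψ w = 1) (h : φ w + ψ v = 1) :
    ∃ θ' : ℝ, rot θ (v + w) (φ + ψ) =
      rot (Real.pi / 4) w ψ * rot θ' v φ * rot (-(Real.pi / 4)) w ψ := by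
  rcases zmod2_cases (ψ v) with h0 | h1
  · refine ⟨θ, ?_⟩
    rw [rot_conj θ v w φ ψ hw h, h0]
    simp [rot]
  · refine ⟨-θ, ?_⟩
    rw [rot_conj (-θ) v w φ ψ hw h, h1]
    simp [rot]

/-- The permutation operator `|y⟩ ↦ |f(y)⟩`. -/
def perm (f : QState n → QState n) : QOp n := mono f fun _ => 1

theorem perm_rot_perm (f g : QState n →ₗ[ZMod 2] QState n) (hfg : f * g = 1) (θ : ℝ) (v : QState n)
    (φ : Module.Dual (ZMod 2) (QState n)) :
    perm f * rot θ v φ * perm g = rot θ (f v) (φ ∘ₗ g) := by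
  have hfg' : ∀ y, f (g y) = y := fun y => by
    have := congrArg (fun h : Module.End (ZMod 2) (QState n) => h y) hfg
    simpa using this
  have h1 : perm (n := n) f * perm g = 1 := by
    rw [perm, perm, mono_mul, ← mono_one]; simp [hfg']
  have h2 : perm f * pauli v φ * perm g = pauli (f v) (φ ∘ₗ g) := by
    rw [perm, perm, pauli, mono_mul, mono_mul, pauli]; simp [hfg']
  rw [rot, rot, mul_add, add_mul, mul_smul_comm, mul_smul_comm, smul_mul_assoc, smul_mul_assoc,
    mul_one, h1, h2]

/-! ### Rotation layers -/

theorem RyM_zero : RyM 0 = 1 := by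
  ext a b
  rcases zmod2_cases a with rfl | rfl <;> rcases zmod2_cases b with rfl | rfl <;> simp [RyM]

theorem RyM_mul (a b : ℝ) : RyM a * RyM b = RyM (a + b) := by
  ext i j
  rw [Matrix.mul_apply]
  have hu : (Finset.univ : Finset (ZMod 2)) = {0, 1} := by decide
  rw [hu, Finset.sum_pair (by decide)]
  rcases zmod2_cases i with rfl | rfl <;> rcases zmod2_cases j with rfl | rfl <;>
    simp [RyM, add_div, Complex.cos_add, Complex.sin_add] <;> ring

theorem rotY_mul (α β : Fin n → ℝ) : rotY α * rotY β = rotY (α + β) := by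
  ext x y
  rw [Matrix.mul_apply]
  simp only [rotY, Matrix.of_apply, Pi.add_apply, ← RyM_mul, Matrix.mul_apply]
  rw [Finset.prod_univ_sum]
  simp only [Fintype.piFinset_univ, Finset.prod_mul_distrib]

theorem rotY_zero : rotY (0 : Fin n → ℝ) = 1 := by
  ext x y
  simp only [rotY, Matrix.of_apply, Pi.zero_apply, RyM_zero, Matrix.one_apply]
  rw [Finset.prod_ite_zero]
  simp [funext_iff]

/-- A rotation layer with a single nonzero angle is the rotation about the Pauli string
`X_q Z_q` (that is, `Y_q` up to a phase). -/
theorem rotY_single (q : Fin n) (θ : ℝ) :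
    rotY (Pi.single q (2 * θ)) = rot θ (Pi.single q 1) (LinearMap.proj q) := by
  ext x y
  simp only [rotY, rot, pauli, mono, Matrix.of_apply, Matrix.add_apply, Matrix.smul_apply,
    Matrix.one_apply, smul_eq_mul, LinearMap.proj_apply]
  rw [← Finset.mul_prod_erase _ _ (Finset.mem_univ q)]
  have hp : ∏ k ∈ Finset.univ.erase q, RyM ((Pi.single q (2 * θ) : Fin n → ℝ) k) (x k) (y k) =
      if ∀ k, k ≠ q → x k = y k then 1 else 0 := by
    rw [Finset.prod_congr rfl (g := fun k => if x k = y k then (1 : ℂ) else 0), Finset.prod_ite_zero]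
    · simp
    · intro k hk
      rw [Pi.single_eq_of_ne (Finset.ne_of_mem_erase hk), RyM_zero, Matrix.one_apply]
  rw [hp, Pi.single_eq_same]
  have hh : 2 * θ / 2 = θ := by ring
  have h11 : (1 : ZMod 2) + 1 = 0 := by decide
  by_cases hxy : ∀ k, k ≠ q → x k = y k
  · have e1 : x = y ↔ x q = y q := by
      refine ⟨fun h => by rw [h], fun h => funext fun k => ?_⟩
      by_cases hk : k = q
      · rw [hk, h]
      · exact hxy k hk
    have e2 : x = y + Pi.single q 1 ↔ x q = y q + 1 := by
      refine ⟨fun h => by rw [h]; simp, fun h => funext fun k => ?_⟩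
      by_cases hk : k = q
      · rw [hk, h]; simp
      · rw [hxy k hk]; simp [hk]
    rw [if_pos hxy, if_congr e1 rfl rfl, if_congr e2 rfl rfl]
    rcases zmod2_cases (x q) with hx | hx <;> rcases zmod2_cases (y q) with hy | hy <;>
      simp [RyM, hx, hy, h11]
  · have e1 : x ≠ y := fun h => hxy fun k _ => by rw [h]
    have e2 : x ≠ y + Pi.single q 1 := fun h => hxy fun k hk => by rw [h]; simp [hk]
    simp [hxy, e1, e2]

/-! ### Operators reachable at a given depth -/

/-- `U` is an ansatz circuit of depth `m`. -/
def Reach (m : ℕ) (U : QOp n) : Prop := ∃ α : ℕ → Fin n → ℝ, ansatzY n α m = U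

theorem ansatzY_congr (α β : ℕ → Fin n → ℝ) (m : ℕ) (h : ∀ i ≤ m, α i = β i) :
    ansatzY n α m = ansatzY n β m := by
  induction m with
  | zero => simp [ansatzY, h 0 le_rfl]
  | succ m ih =>
    rw [ansatzY, ansatzY, h (m + 1) le_rfl, ih fun i hi => h i (by omega)]

/-- Depths add under composition: the two adjacent rotation layers merge into one. -/
theorem Reach.mul {a b : ℕ} {U V : QOp n} (hU : Reach a U) (hV : Reach b V) :
    Reach (a + b) (U * V) := by
  obtain ⟨α, rfl⟩ := hU
  obtain ⟨β, rfl⟩ := hV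
  let γ : ℕ → Fin n → ℝ := fun i => if i < b then β i else if i = b then α 0 + β b else α (i - b)
  refine ⟨γ, ?_⟩
  induction a with
  | zero =>
    rw [zero_add, ansatzY]
    cases b with
    | zero => simp [ansatzY, γ, rotY_mul]
    | succ b =>
      have h1 : γ (b + 1) = α 0 + β (b + 1) := by simp [γ]
      have h2 : ansatzY n γ b = ansatzY n β b :=
        ansatzY_congr _ _ _ fun i hi => if_pos (by omega)
      change rotY (γ (b + 1)) * ladderCNOT n * ansatzY n γ b =
        rotY (α 0) * (rotY (β (b + 1)) * ladderCNOT n * ansatzY n β b)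
      rw [← mul_assoc, ← mul_assoc, rotY_mul, h1, h2]
  | succ a ih =>
    rw [Nat.add_right_comm, ansatzY, ansatzY, ih, mul_assoc, mul_assoc, mul_assoc]
    congr 1
    simp only [γ]
    rw [if_neg (by omega), if_neg (by omega)]
    congr 2
    omega

theorem reach_rot (q : Fin n) (θ : ℝ) :
    Reach 0 (rot θ (Pi.single q 1) (LinearMap.proj q)) :=
  ⟨fun _ => Pi.single q (2 * θ), by rw [ansatzY, rotY_single]⟩

theorem reach_one : Reach 0 (1 : QOp n) := ⟨fun _ => 0, by rw [ansatzY, rotY_zero]⟩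

theorem reach_ladder : Reach 1 (ladderCNOT n) :=
  ⟨fun _ => 0, by rw [ansatzY, ansatzY, rotY_zero, one_mul, mul_one]⟩

/-! ### The ladder as a unipotent linear map -/

/-- The first CNOT layer as a linear map on bit strings. -/
def lay1 (n : ℕ) : Module.End (ZMod 2) (QState n) where
  toFun := layer1Map n
  map_add' x y := by
    ext i
    simp only [layer1Map, Pi.add_apply, bitAt]
    split_ifs <;> ring
  map_smul' c x := by
    ext i
    simp only [layer1Map, Pi.smul_apply, bitAt, smul_eq_mul, RingHom.id_apply]
    split_ifs <;> ring

/-- The second CNOT layer as a linear map on bit strings. -/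
def lay2 (n : ℕ) : Module.End (ZMod 2) (QState n) where
  toFun := layer2Map n
  map_add' x y := by
    ext i
    simp only [layer2Map, Pi.add_apply, bitAt]
    split_ifs <;> ring
  map_smul' c x := by
    ext i
    simp only [layer2Map, Pi.smul_apply, bitAt, smul_eq_mul, RingHom.id_apply]
    split_ifs <;> ring

/-- The ladder as a linear map on bit strings. -/
def lad (n : ℕ) : Module.End (ZMod 2) (QState n) := lay2 n * lay1 n

/-- The inverse of the ladder. -/
def ladInv (n : ℕ) : Module.End (ZMod 2) (QState n) := lay1 n * lay2 n

/-- The bit of the qubit at distance `p` from the last qubit, as a linear functional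
(zero when `p ≥ n`). -/
def co (p : ℕ) : Module.Dual (ZMod 2) (QState n) :=
  if h : p < n then LinearMap.proj ⟨n - 1 - p, by omega⟩ else 0

/-- The basis state whose only nonzero bit is at distance `p` from the last qubit. -/
def ev (p : ℕ) : QState n := fun i => if n - 1 - (i : ℕ) = p then 1 else 0

theorem co_apply {p : ℕ} (h : p < n) (x : QState n) : co p x = x ⟨n - 1 - p, by omega⟩ := by
  simp [co, h]

theorem co_ge {p : ℕ} (h : ¬ p < n) : co (n := n) p = 0 := by
  simp [co, h]

theorem co_ev {p : ℕ} (h : p < n) (q : ℕ) : co p (ev q : QState n) = if p = q then 1 else 0 := by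
  rw [co_apply h, ev]
  refine if_congr ?_ rfl rfl
  simp only
  omega

theorem state_ext {x y : QState n} (h : ∀ p < n, co p x = co p y) : x = y := by
  ext i
  have := h (n - 1 - i) (by omega)
  rw [co_apply (by omega), co_apply (by omega)] at this
  have hi : (⟨n - 1 - (n - 1 - (i : ℕ)), by omega⟩ : Fin n) = i := by
    ext; simp only; omega
  rwa [hi] at this

theorem co_lay1 {p : ℕ} (h : p < n) (x : QState n) :
    co p (lay1 n x) = co p x + if p % 2 = 1 then co (p - 1) x else 0 := by
  rw [co_apply h, co_apply h]
  simp only [lay1, LinearMap.coe_mk, AddHom.coe_mk, layer1Map]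
  by_cases hp : p % 2 = 1
  · rw [if_pos (by omega), if_pos hp, co_apply (by omega), bitAt, dif_pos (by omega)]
    congr 3
    omega
  · rw [if_neg (by omega), if_neg hp, add_zero]

theorem co_lay2 {p : ℕ} (h : p < n) (x : QState n) :
    co p (lay2 n x) = co p x + if p % 2 = 0 ∧ 1 ≤ p then co (p - 1) x else 0 := by
  rw [co_apply h, co_apply h]
  simp only [lay2, LinearMap.coe_mk, AddHom.coe_mk, layer2Map]
  by_cases hp : p % 2 = 0 ∧ 1 ≤ p
  · rw [if_pos (by omega), if_pos hp, co_apply (by omega), bitAt, dif_pos (by omega)]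
    congr 3
    omega
  · rw [if_neg (by omega), if_neg hp, add_zero]

theorem co_lad {p : ℕ} (h : p < n) (x : QState n) :
    co p (lad n x) = co p x + (if 1 ≤ p then co (p - 1) x else 0) +
      if p % 2 = 0 ∧ 2 ≤ p then co (p - 2) x else 0 := by
  rw [lad, Module.End.mul_apply, co_lay2 h, co_lay1 h]
  rcases Nat.mod_two_eq_zero_or_one p with hp | hp
  · by_cases h1 : 1 ≤ p
    · rw [if_neg (by omega), if_pos (by omega), if_pos h1, if_pos (by omega), co_lay1 (by omega),
        if_pos (by omega), Nat.sub_sub, add_zero, add_assoc]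
    · rw [if_neg (by omega), if_neg (by omega), if_neg h1, if_neg (by omega)]
  · rw [if_pos hp, if_neg (by omega), if_pos (by omega), if_neg (by omega)]

theorem co_ladInv {p : ℕ} (h : p < n) (x : QState n) :
    co p (ladInv n x) = co p x + (if 1 ≤ p then co (p - 1) x else 0) +
      if p % 2 = 1 ∧ 2 ≤ p then co (p - 2) x else 0 := by
  rw [ladInv, Module.End.mul_apply, co_lay1 h, co_lay2 h]
  rcases Nat.mod_two_eq_zero_or_one p with hp | hp
  · rw [if_neg (by omega : ¬ p % 2 = 1), if_neg (by omega : ¬ (p % 2 = 1 ∧ 2 ≤ p)), add_zero,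
      add_zero]
    congr 1
    exact if_congr (by omega) rfl rfl
  · by_cases h1 : 2 ≤ p
    · rw [if_neg (by omega), if_pos (by omega), if_pos (by omega), if_pos (by omega),
        co_lay2 (by omega), if_pos (by omega), Nat.sub_sub, add_zero, add_assoc]
    · have : p = 1 := by omega
      subst this
      simp [co_lay2 (show 0 < n by omega)]

theorem lay1_sq : lay1 n * lay1 n = 1 := by
  refine LinearMap.ext fun x => state_ext fun p hp => ?_
  rw [Module.End.mul_apply, co_lay1 hp, co_lay1 hp, Module.End.one_apply]
  by_cases h : p % 2 = 1
  · rw [if_pos h, if_pos h, co_lay1 (by omega), if_neg (by omega), add_zero, add_assoc,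
      add_self_zmod2, add_zero]
  · simp [h]

theorem lay2_sq : lay2 n * lay2 n = 1 := by
  refine LinearMap.ext fun x => state_ext fun p hp => ?_
  rw [Module.End.mul_apply, co_lay2 hp, co_lay2 hp, Module.End.one_apply]
  by_cases h : p % 2 = 0 ∧ 1 ≤ p
  · rw [if_pos h, if_pos h, co_lay2 (by omega), if_neg (by omega), add_zero, add_assoc,
      add_self_zmod2, add_zero]
  · simp [h]

theorem lad_mul_ladInv : lad n * ladInv n = 1 := by
  rw [lad, ladInv, mul_assoc, ← mul_assoc (lay1 n), lay1_sq, one_mul, lay2_sq]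

/-- The number of steps after which the ladder returns to the identity: the least power of two
that is at least the number of qubits. -/
def period (n : ℕ) : ℕ := 2 ^ Nat.clog 2 n

/-- `lad - 1` raises the distance from the last qubit, hence is nilpotent of index at most `n`;
in characteristic two, `lad ^ (2 ^ k) - 1 = (lad - 1) ^ (2 ^ k)`. -/
theorem lad_pow_period : lad n ^ period n = 1 := by
  have hnil : ∀ k : ℕ, ∀ x : QState n, ∀ p < n, p < k → co p (((lad n - 1) ^ k) x) = 0 := by
    intro k
    induction k with
    | zero => intro x p _ h; omega
    | succ k ih =>
      intro x p hp hpk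
      rw [pow_succ', Module.End.mul_apply, LinearMap.sub_apply, Module.End.one_apply, map_sub,
        co_lad hp]
      rw [add_assoc, add_sub_cancel_left]
      have h1 : (if 1 ≤ p then co (p - 1) (((lad n - 1) ^ k) x) else 0) = 0 := by
        split_ifs with h
        · exact ih x (p - 1) (by omega) (by omega)
        · rfl
      have h2 : (if p % 2 = 0 ∧ 2 ≤ p then co (p - 2) (((lad n - 1) ^ k) x) else 0) = 0 := by
        split_ifs with h
        · exact ih x (p - 2) (by omega) (by omega)
        · rfl
      rw [h1, h2, add_zero]
  have hle : n ≤ period n := Nat.le_pow_clog (by norm_num) n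
  have h0 : (lad n - 1) ^ period n = 0 := by
    refine LinearMap.ext fun x => state_ext fun p hp => ?_
    rw [hnil _ x p hp (by omega)]
    simp
  have hdouble : ∀ A : Module.End (ZMod 2) (QState n), (A - 1) * (A - 1) = A * A - 1 := by
    intro A
    have h2 : A + A = 0 := by
      refine LinearMap.ext fun x => ?_
      simpa using add_self_state (A x)
    have h3 : (1 : Module.End (ZMod 2) (QState n)) + 1 = 0 := by
      refine LinearMap.ext fun x => ?_
      simpa using add_self_state x
    calc (A - 1) * (A - 1) = A * A - (A + A) + (1 + 1) - 1 := by
          rw [sub_mul, mul_sub, one_mul, mul_one]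
          abel
      _ = A * A - 1 := by rw [h2, h3]; abel
  have hpow : ∀ k : ℕ, (lad n - 1) ^ 2 ^ k = lad n ^ 2 ^ k - 1 := by
    intro k
    induction k with
    | zero => simp
    | succ k ih => rw [pow_succ, pow_mul, pow_mul, ih, sq, sq, hdouble]
  have := hpow (Nat.clog 2 n)
  rw [show 2 ^ Nat.clog 2 n = period n from rfl, h0] at this
  exact (sub_eq_zero.mp this.symm)

theorem ladInv_pow {t : ℕ} (ht : t ≤ period n) : ladInv n ^ t = lad n ^ (period n - t) := by
  have hc : Commute (lad n) (ladInv n) := by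
    rw [Commute, SemiconjBy, lad_mul_ladInv, lad, ladInv, mul_assoc, ← mul_assoc (lay2 n), lay2_sq,
      one_mul, lay1_sq]
  have h1 : lad n ^ t * ladInv n ^ t = 1 := by
    rw [← hc.mul_pow, lad_mul_ladInv, one_pow]
  calc ladInv n ^ t = lad n ^ (period n - t) * lad n ^ t * ladInv n ^ t := by
        rw [← pow_add, Nat.sub_add_cancel ht, lad_pow_period, one_mul]
    _ = lad n ^ (period n - t) := by rw [mul_assoc, h1, mul_one]

theorem period_le (hn : 2 ≤ n) : period n ≤ 2 * (n - 1) := by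
  have h1 : 0 < Nat.clog 2 n := Nat.clog_pos (by norm_num) hn
  have h2 : 2 ^ (Nat.clog 2 n).pred < n := Nat.pow_pred_clog_lt_self (by norm_num) (by omega)
  obtain ⟨c, hc⟩ : ∃ c, Nat.clog 2 n = c + 1 := ⟨Nat.clog 2 n - 1, by omega⟩
  rw [hc, Nat.pred_succ] at h2
  rw [period, hc, pow_succ]
  omega

theorem le_period : n ≤ period n := Nat.le_pow_clog (by norm_num) n

/-! ### Odd Pauli strings whose rotations are reachable -/

theorem reach_lad_pow (t : ℕ) : Reach t (perm (n := n) (lad n ^ t : Module.End (ZMod 2) (QState n))) := by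
  induction t with
  | zero =>
    have : perm (n := n) (lad n ^ 0 : Module.End (ZMod 2) (QState n)) = 1 := mono_one
    rw [this]
    exact reach_one
  | succ t ih =>
    have := (reach_ladder (n := n)).mul ih
    rw [add_comm] at this
    convert this using 1
    rw [show ladderCNOT n = perm (lad n) from rfl, perm, perm, perm, mono_mul, pow_succ', mul_one]
    rfl

/-- The rotations about `X^v Z^φ`, a Pauli string squaring to `-1`, are all reachable within `c`
periods of the ladder. -/
def Good (c : ℕ) (v : QState n) (φ : Module.Dual (ZMod 2) (QState n)) : Prop :=
  φ v = 1 ∧ ∀ θ : ℝ, Reach (c * period n) (rot θ v φ)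

theorem Good.mono {a b : ℕ} {v : QState n} {φ : Module.Dual (ZMod 2) (QState n)} (h : Good a v φ)
    (hab : a ≤ b) : Good b v φ := by
  refine ⟨h.1, fun θ => ?_⟩
  obtain ⟨d, rfl⟩ := Nat.exists_eq_add_of_le hab
  have h1 : Reach (d * period n) (1 : QOp n) := by
    have := reach_lad_pow (n := n) (d * period n)
    rw [mul_comm, pow_mul, lad_pow_period, one_pow] at this
    rw [mul_comm]
    rwa [show perm (n := n) (1 : Module.End (ZMod 2) (QState n)) = 1 from mono_one] at this
  have := (h.2 θ).mul h1
  rwa [← add_mul, mul_one] at this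

theorem Good.conj {a b : ℕ} {v w : QState n} {φ ψ : Module.Dual (ZMod 2) (QState n)}
    (hv : Good a v φ) (hw : Good b w ψ) (h : φ w + ψ v = 1) :
    Good (a + 2 * b) (v + w) (φ + ψ) := by
  refine ⟨?_, fun θ => ?_⟩
  · rw [map_add, LinearMap.add_apply, LinearMap.add_apply, hv.1, hw.1]
    calc (1 : ZMod 2) + ψ v + (φ w + 1) = (φ w + ψ v) + (1 + 1) := by ring
      _ = 1 := by rw [h]; decide
  · obtain ⟨θ', h'⟩ := rot_conj' θ v w φ ψ hw.1 h
    rw [h']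
    have := ((hw.2 (Real.pi / 4)).mul (hv.2 θ')).mul (hw.2 (-(Real.pi / 4)))
    convert this using 1
    ring

theorem single_eq_ev {p : ℕ} (h : p < n) :
    (Pi.single (⟨n - 1 - p, by omega⟩ : Fin n) (1 : ZMod 2) : QState n) = ev p := by
  ext i
  rw [Pi.single_apply, ev]
  refine if_congr ?_ rfl rfl
  rw [Fin.ext_iff]
  simp only
  omega

theorem good_Y {p : ℕ} (h : p < n) : Good 0 (ev p : QState n) (co p) := by
  refine ⟨by simp [co_ev h], fun θ => ?_⟩
  have := reach_rot (⟨n - 1 - p, by omega⟩ : Fin n) θ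
  rw [single_eq_ev h] at this
  rw [zero_mul, co, dif_pos h]
  exact this

/-- Moving a rotation through `s` ladders, and back around the cycle of length `period n`. -/
theorem good_lad_pow {p : ℕ} (h : p < n) {s t : ℕ} (hst : s + t = period n) :
    Good 1 ((lad n ^ s) (ev p : QState n)) (co p ∘ₗ (lad n ^ t)) := by
  have h1 : lad n ^ t * lad n ^ s = 1 := by rw [← pow_add, add_comm, hst, lad_pow_period]
  have h2 : lad n ^ s * lad n ^ t = 1 := by rw [← pow_add, hst, lad_pow_period]
  refine ⟨?_, fun θ => ?_⟩
  · have : (lad n ^ t) ((lad n ^ s) (ev p : QState n)) = ev p := by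
      rw [← Module.End.mul_apply, h1, Module.End.one_apply]
    rw [LinearMap.comp_apply, this]
    simp [co_ev h]
  · have := ((reach_lad_pow (n := n) s).mul
      (show Reach 0 _ by simpa using (good_Y h).2 θ)).mul (reach_lad_pow (n := n) t)
    rw [perm_rot_perm _ _ h2] at this
    rwa [add_zero, hst, ← one_mul (period n)] at this

/-- Moving a rotation through `t` ladders forwards. -/
theorem good_fwd {p : ℕ} (h : p < n) {t : ℕ} (ht : t ≤ period n) :
    Good 1 ((lad n ^ t) (ev p : QState n)) (co p ∘ₗ (ladInv n ^ t)) := by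
  rw [ladInv_pow ht]
  exact good_lad_pow h (by omega)

/-- Moving a rotation through `t` ladders backwards. -/
theorem good_bwd {p : ℕ} (h : p < n) {t : ℕ} (ht : t ≤ period n) :
    Good 1 ((ladInv n ^ t) (ev p : QState n)) (co p ∘ₗ (lad n ^ t)) := by
  rw [ladInv_pow ht]
  exact good_lad_pow h (by omega)

/-! ### Pauli strings on the four ancilla qubits -/

/-- A truth value as a bit. -/
def b2z (b : Bool) : ZMod 2 := if b then 1 else 0

@[simp] theorem b2z_true : b2z true = 1 := rfl

@[simp] theorem b2z_false : b2z false = 0 := rfl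

theorem b2z_xor (a b : Bool) : b2z (a ^^ b) = b2z a + b2z b := by
  revert a b; decide

theorem b2z_and (a b : Bool) : b2z (a && b) = b2z a * b2z b := by
  revert a b; decide

/-- A Pauli string on the last four qubits is coded by a number below `256`: for `p < 4`, bit `p`
is the `X`-exponent and bit `p + 4` the `Z`-exponent of the qubit at distance `p` from the end.
This is the `X`-part of the string. -/
def ax (d : ℕ) : QState n :=
  fun i => if n - 1 - (i : ℕ) < 4 then b2z (d.testBit (n - 1 - (i : ℕ))) else 0

/-- The `Z`-part of the Pauli string on the last four qubits with code `d`. -/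
def az (d : ℕ) : Module.Dual (ZMod 2) (QState n) :=
  ∑ p ∈ Finset.range 4, b2z (d.testBit (p + 4)) • co p

theorem co_ax {p : ℕ} (h : p < n) (d : ℕ) :
    co p (ax d : QState n) = if p < 4 then b2z (d.testBit p) else 0 := by
  have : n - 1 - (n - 1 - p) = p := by omega
  rw [co_apply h, ax]
  simp only [this]

theorem ax_xor (d g : ℕ) : (ax (d ^^^ g) : QState n) = ax d + ax g := by
  refine state_ext fun p hp => ?_
  rw [map_add, co_ax hp, co_ax hp, co_ax hp, Nat.testBit_xor, b2z_xor]
  split_ifs <;> simp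

theorem az_xor (d g : ℕ) : (az (d ^^^ g) : Module.Dual (ZMod 2) (QState n)) = az d + az g := by
  simp only [az, Nat.testBit_xor, b2z_xor, add_smul, Finset.sum_add_distrib]

/-- Whether two coded Pauli strings anticommute. -/
def anti (d g : ℕ) : Bool :=
  (d.testBit 4 && g.testBit 0) ^^ (d.testBit 5 && g.testBit 1) ^^
  (d.testBit 6 && g.testBit 2) ^^ (d.testBit 7 && g.testBit 3) ^^
  (g.testBit 4 && d.testBit 0) ^^ (g.testBit 5 && d.testBit 1) ^^
  (g.testBit 6 && d.testBit 2) ^^ (g.testBit 7 && d.testBit 3)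

/-- Whether a coded Pauli string has an odd number of `Y` factors. -/
def oddY (d : ℕ) : Bool :=
  (d.testBit 4 && d.testBit 0) ^^ (d.testBit 5 && d.testBit 1) ^^
  (d.testBit 6 && d.testBit 2) ^^ (d.testBit 7 && d.testBit 3)

theorem az_ax (hn : 4 ≤ n) (d g : ℕ) :
    (az d : Module.Dual (ZMod 2) (QState n)) (ax g) =
      b2z (d.testBit 4 && g.testBit 0) + b2z (d.testBit 5 && g.testBit 1) +
      b2z (d.testBit 6 && g.testBit 2) + b2z (d.testBit 7 && g.testBit 3) := by
  simp only [az, Finset.sum_range_succ, Finset.sum_range_zero, zero_add, b2z_and,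
    LinearMap.add_apply, LinearMap.smul_apply, smul_eq_mul]
  rw [co_ax (by omega), co_ax (by omega), co_ax (by omega), co_ax (by omega)]
  norm_num

theorem az_ax_add (hn : 4 ≤ n) (d g : ℕ) :
    (az d : Module.Dual (ZMod 2) (QState n)) (ax g) +
      (az g : Module.Dual (ZMod 2) (QState n)) (ax d) = b2z (anti d g) := by
  rw [az_ax hn, az_ax hn, anti]
  simp only [b2z_xor]
  ring

theorem az_ax_self (hn : 4 ≤ n) (d : ℕ) :
    (az d : Module.Dual (ZMod 2) (QState n)) (ax d) = b2z (oddY d) := by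
  rw [az_ax hn, oddY]
  simp only [b2z_xor]

/-- The state `w` vanishes on the ancilla qubits. -/
def OffAnc (w : QState n) : Prop := ∀ p < 4, co p w = 0

theorem az_offAnc {w : QState n} (hw : OffAnc w) (d : ℕ) : az d w = 0 := by
  simp only [az, LinearMap.sum_apply, LinearMap.smul_apply]
  exact Finset.sum_eq_zero fun p hp => by rw [hw p (Finset.mem_range.mp hp), smul_zero]

/-- Attaching an ancilla string to a string whose `Z`-part lives on the ancillas. -/
theorem good_attach (hn : 4 ≤ n) {a b d g : ℕ} {w : QState n} (hw : OffAnc w)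
    (h : Good a (ax d + w) (az d)) (hg : Good b (ax g : QState n) (az g)) (ho : anti d g = true) :
    Good (a + 2 * b) (ax (d ^^^ g) + w) (az (d ^^^ g)) := by
  rw [ax_xor, az_xor, add_right_comm]
  refine h.conj hg ?_
  rw [map_add, az_offAnc hw, add_zero, az_ax_add hn, ho, b2z_true]

theorem ax_eq {d : ℕ} {v : QState n} (h : ∀ p < n, co p v = if p < 4 then b2z (d.testBit p) else 0) :
    ax d = v :=
  state_ext fun p hp => by rw [co_ax hp, h p hp]

theorem az_eq (d : ℕ) : (az d : Module.Dual (ZMod 2) (QState n)) =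
    b2z (d.testBit 4) • co 0 + b2z (d.testBit 5) • co 1 +
      b2z (d.testBit 6) • co 2 + b2z (d.testBit 7) • co 3 := by
  simp [az, Finset.sum_range_succ]

theorem lt_four_cases {p : ℕ} (h : p < 4) : p = 0 ∨ p = 1 ∨ p = 2 ∨ p = 3 := by omega

/-- `Y_p` for `p < 4`. -/
theorem good_free (hn : 4 ≤ n) : ∀ g ∈ [17, 34, 68, 136], Good 0 (ax g : QState n) (az g) := by
  have key : ∀ q < 4, ∀ g, (∀ p < 4, b2z (g.testBit p) = if p = q then 1 else 0) →
      (∀ p < 4, b2z (g.testBit (p + 4)) = if p = q then 1 else 0) →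
      Good 0 (ax g : QState n) (az g) := by
    intro q hq g h1 h2
    have e1 : (ax g : QState n) = ev q := ax_eq fun p hp => by
      rw [co_ev hp]
      by_cases hp4 : p < 4
      · rw [if_pos hp4, h1 p hp4]
      · rw [if_neg hp4, if_neg (by omega)]
    have e2 : (az g : Module.Dual (ZMod 2) (QState n)) = co q := by
      rw [az, Finset.sum_eq_single q]
      · rw [h2 q hq, if_pos rfl, one_smul]
      · intro p hp hpq
        rw [h2 p (Finset.mem_range.mp hp), if_neg hpq, zero_smul]
      · intro h
        exact absurd (Finset.mem_range.mpr hq) h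
    rw [e1, e2]
    exact good_Y (by omega)
  intro g hg
  simp only [List.mem_cons, List.not_mem_nil, or_false] at hg
  rcases hg with rfl | rfl | rfl | rfl
  · exact key 0 (by norm_num) _ (by decide) (by decide)
  · exact key 1 (by norm_num) _ (by decide) (by decide)
  · exact key 2 (by norm_num) _ (by decide) (by decide)
  · exact key 3 (by norm_num) _ (by decide) (by decide)

/-- The codes `23`, `29`, `54`, `124` are the strings `Y₀X₁X₂`, `Y₀X₂X₃`, `Z₀Y₁X₂`, `Z₀Z₁Y₂X₃`,
obtained by moving `Y₀`, `Y₀`, `Y₁`, `Y₂` through `1`, `-2`, `1`, `-1` ladders respectively. -/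
theorem good_paid (hn : 4 ≤ n) :
    ∀ g ∈ [23, 29, 54, 124], Good 1 (ax g : QState n) (az g) := by
  have hper : n ≤ period n := le_period
  have c0 : ∀ x : QState n, co 0 (lad n x) = co 0 x := fun x => by
    rw [co_lad (by omega)]; simp
  have c0' : ∀ x : QState n, co 0 (ladInv n x) = co 0 x := fun x => by
    rw [co_ladInv (by omega)]; simp
  intro g hg
  simp only [List.mem_cons, List.not_mem_nil, or_false] at hg
  rcases hg with rfl | rfl | rfl | rfl
  · convert good_fwd (n := n) (p := 0) (by omega) (t := 1) (by omega) using 1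
    · refine ax_eq fun p hp => ?_
      rw [pow_one, co_lad hp, co_ev hp, co_ev (by omega), co_ev (by omega)]
      by_cases hp4 : p < 4
      · rcases lt_four_cases hp4 with rfl | rfl | rfl | rfl <;> decide
      · simp only [hp4, if_false]
        rw [if_neg (by omega), if_neg (by omega : ¬ p - 1 = 0), if_neg (by omega : ¬ p - 2 = 0)]
        simp
    · refine LinearMap.ext fun x => ?_
      rw [az_eq, pow_one, LinearMap.comp_apply, c0']
      simp [Nat.testBit]
  · convert good_bwd (n := n) (p := 0) (by omega) (t := 2) (by omega) using 1
    · refine ax_eq fun p hp => ?_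
      rw [pow_two, Module.End.mul_apply, co_ladInv hp, co_ladInv hp, co_ladInv (by omega),
        co_ladInv (by omega), co_ev hp, co_ev (by omega), co_ev (by omega), co_ev (by omega),
        co_ev (by omega), co_ev (by omega), co_ev (by omega)]
      by_cases hp4 : p < 4
      · rcases lt_four_cases hp4 with rfl | rfl | rfl | rfl <;> decide
      · simp only [hp4, if_false]
        have e0 : ¬ p = 0 := by omega
        have e1 : ¬ p - 1 = 0 := by omega
        have e2 : ¬ p - 1 - 1 = 0 := by omega
        have e3 : ¬ p - 1 - 2 = 0 := by omega
        have e4 : ¬ p - 2 = 0 := by omega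
        have e5 : ¬ p - 2 - 1 = 0 := by omega
        by_cases e6 : p - 2 - 2 = 0
        · have : p = 4 := by omega
          subst this
          decide
        · simp only [e0, e1, e2, e3, e4, e5, e6, if_false]
          simp
    · refine LinearMap.ext fun x => ?_
      rw [az_eq, pow_two, LinearMap.comp_apply, Module.End.mul_apply, c0, c0]
      simp [Nat.testBit]
  · convert good_fwd (n := n) (p := 1) (by omega) (t := 1) (by omega) using 1
    · refine ax_eq fun p hp => ?_
      rw [pow_one, co_lad hp, co_ev hp, co_ev (by omega), co_ev (by omega)]
      by_cases hp4 : p < 4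
      · rcases lt_four_cases hp4 with rfl | rfl | rfl | rfl <;> decide
      · simp only [hp4, if_false]
        rw [if_neg (by omega), if_neg (by omega : ¬ p - 1 = 1),
          if_congr (Iff.rfl) (if_neg (by omega : ¬ p - 2 = 1)) rfl]
        simp
    · refine LinearMap.ext fun x => ?_
      rw [az_eq, pow_one, LinearMap.comp_apply, co_ladInv (by omega)]
      simp [Nat.testBit, add_comm]
  · convert good_bwd (n := n) (p := 2) (by omega) (t := 1) (by omega) using 1
    · refine ax_eq fun p hp => ?_
      rw [pow_one, co_ladInv hp, co_ev hp, co_ev (by omega), co_ev (by omega)]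
      by_cases hp4 : p < 4
      · rcases lt_four_cases hp4 with rfl | rfl | rfl | rfl <;> decide
      · simp only [hp4, if_false]
        by_cases h4 : p = 4
        · subst h4; decide
        · rw [if_neg (by omega), if_neg (by omega : ¬ p - 1 = 2), if_neg (by omega : ¬ p - 2 = 2)]
          simp
    · refine LinearMap.ext fun x => ?_
      rw [az_eq, pow_one, LinearMap.comp_apply, co_lad (by omega)]
      simp [Nat.testBit, add_comm, add_left_comm]

/-! ### Connectedness of the odd ancilla strings -/

/-- The subset of `{0, …, 255}` cut out by `P`, as a bit mask. -/
def maskOf (P : ℕ → Bool) : ℕ :=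
  (List.range 256).foldl (fun S d => if P d then S ||| (1 <<< d) else S) 0

theorem testBit_maskOf {P : ℕ → Bool} {d : ℕ} (h : (maskOf P).testBit d = true) : P d = true := by
  have key : ∀ (l : List ℕ) (S : ℕ), (∀ e, S.testBit e = true → P e = true) →
      ∀ e, (l.foldl (fun S d => if P d then S ||| (1 <<< d) else S) S).testBit e = true →
        P e = true := by
    intro l
    induction l with
    | nil => intro S hS e he; exact hS e he
    | cons a l ih =>
      intro S hS e he
      rw [List.foldl_cons] at he
      refine ih _ ?_ e he
      intro e' he'
      by_cases ha : P a = true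
      · rw [if_pos ha, Nat.testBit_or, Nat.one_shiftLeft, Nat.testBit_two_pow] at he'
        by_cases hae : a = e'
        · rwa [← hae]
        · exact hS e' (by simpa [hae] using he')
      · rw [if_neg ha] at he'
        exact hS e' he'
  exact key _ 0 (by simp) d h

/-- Enlarge a set of codes by those that one of the strings in `gs` carries into it. -/
def pass (gs : List ℕ) (S : ℕ) : ℕ :=
  S ||| maskOf fun d => gs.any fun g => anti d g && S.testBit (d ^^^ g)

/-- Enlarge a set of codes by the quarter-turns about the single-qubit strings `Y_p`. -/
def passFree (S : ℕ) : ℕ := pass [136] (pass [68] (pass [34] (pass [17] S)))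

/-- The codes that can be carried into `S` with at most `c` steps that cost a period. -/
def ball (S : ℕ) : ℕ → ℕ
  | 0 => passFree S
  | c + 1 => passFree (pass [23, 29, 54, 124] (ball S c))

/-- Every code in `S` can be transformed into one in `T` at a cost of `2 * c` periods, whatever
the string carries on the data qubits. -/
def Sound (n T c S : ℕ) : Prop :=
  ∀ d, S.testBit d = true → d < 256 → ∀ a (w : QState n), OffAnc w → Good a (ax d + w) (az d) →
    ∃ e < 256, T.testBit e = true ∧ Good (a + 2 * c) (ax e + w) (az e)

theorem Sound.pass (hn : 4 ≤ n) {T c S b : ℕ} (h : Sound n T c S) {gs : List ℕ}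
    (hgs : ∀ g ∈ gs, g < 256) (hg : ∀ g ∈ gs, Good b (ax g : QState n) (az g)) :
    Sound n T (c + b) (pass gs S) := by
  intro d hd hd256 a w hw hgood
  rw [RyCNOT.pass, Nat.testBit_or, Bool.or_eq_true] at hd
  rcases hd with hd | hd
  · obtain ⟨e, he, hT, hG⟩ := h d hd hd256 a w hw hgood
    exact ⟨e, he, hT, hG.mono (by omega)⟩
  · have hd' := testBit_maskOf hd
    rw [List.any_eq_true] at hd'
    obtain ⟨g, hgm, hd'⟩ := hd'
    rw [Bool.and_eq_true] at hd'
    obtain ⟨e, he, hT, hG⟩ := h (d ^^^ g) hd'.2 (Nat.xor_lt_two_pow (n := 8) hd256 (hgs g hgm)) _ w hw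
      (good_attach hn hw hgood (hg g hgm) hd'.1)
    exact ⟨e, he, hT, hG.mono (by omega)⟩

theorem Sound.passFree (hn : 4 ≤ n) {T c S : ℕ} (h : Sound n T c S) :
    Sound n T c (passFree S) := by
  have hf := good_free hn
  have h1 := h.pass hn (gs := [17]) (b := 0) (by simp) (fun g hg => hf g (by simp_all))
  have h2 := h1.pass hn (gs := [34]) (b := 0) (by simp) (fun g hg => hf g (by simp_all))
  have h3 := h2.pass hn (gs := [68]) (b := 0) (by simp) (fun g hg => hf g (by simp_all))
  exact h3.pass hn (gs := [136]) (b := 0) (by simp) (fun g hg => hf g (by simp_all))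

theorem sound_ball (hn : 4 ≤ n) (S c : ℕ) : Sound n S c (ball S c) := by
  induction c with
  | zero =>
    have h0 : Sound n S 0 S := fun d hd hd256 a w _ hG => ⟨d, hd256, hd, by simpa using hG⟩
    exact h0.passFree hn
  | succ c ih => exact (ih.pass hn (b := 1) (by simp) (good_paid hn)).passFree hn

/-- Every odd ancilla string is at most six paid steps away from `Y₀`. -/
theorem ball_Y0 : ∀ d < 256, oddY d = true → (ball (1 <<< 17) 6).testBit d = true := by
  decide +kernel

/-- Every odd ancilla string is at most two paid steps away from one that anticommutes with
`Y₀ X^a`, where `a` is any string on the last three ancillas. -/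
theorem ball_anti : ∀ g ∈ [17, 19, 21, 23, 25, 27, 29, 31], ∀ d < 256, oddY d = true →
    (ball (maskOf fun e => anti e g) 2).testBit d = true := by
  decide +kernel

/-! ### Ladder orbits of `Y₀` reaching a prescribed qubit -/

theorem co_zero_lad_pow (hn : 1 ≤ n) (t : ℕ) (x : QState n) : co 0 ((lad n ^ t) x) = co 0 x := by
  induction t with
  | zero => simp
  | succ t ih =>
    rw [pow_succ', Module.End.mul_apply, co_lad (by omega)]
    simpa using ih

theorem co_zero_ladInv_pow (hn : 1 ≤ n) (t : ℕ) (x : QState n) :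
    co 0 ((ladInv n ^ t) x) = co 0 x := by
  induction t with
  | zero => simp
  | succ t ih =>
    rw [pow_succ', Module.End.mul_apply, co_ladInv (by omega)]
    simpa using ih

theorem co_lad_pow_top (t : ℕ) : ∀ p < n, 2 * t ≤ p →
    co p ((lad n ^ t) (ev 0 : QState n)) = if p = 2 * t then 1 else 0 := by
  induction t with
  | zero => intro p hp _; rw [pow_zero, Module.End.one_apply, co_ev hp, mul_zero]
  | succ t ih =>
    intro p hp hpt
    rw [pow_succ', Module.End.mul_apply, co_lad hp, ih p hp (by omega),
      if_neg (by omega : ¬ p = 2 * t), if_pos (by omega : 1 ≤ p),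
      ih (p - 1) (by omega) (by omega), if_neg (by omega : ¬ p - 1 = 2 * t), zero_add, zero_add]
    by_cases h : p = 2 * (t + 1)
    · rw [if_pos (by omega), if_pos h, ih (p - 2) (by omega) (by omega), if_pos (by omega)]
    · rw [if_neg h]
      split_ifs with h2
      · rw [ih (p - 2) (by omega) (by omega), if_neg (by omega)]
      · rfl

theorem co_ladInv_pow_top (t : ℕ) : ∀ p < n, 2 * t + 1 ≤ p →
    co p ((ladInv n ^ (t + 1)) (ev 0 : QState n)) = if p = 2 * t + 1 then 1 else 0 := by
  induction t with
  | zero =>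
    intro p hp hpt
    rw [zero_add, pow_one, co_ladInv hp, co_ev hp, co_ev (by omega), if_neg (by omega : ¬ p = 0),
      if_pos (by omega : 1 ≤ p), zero_add]
    by_cases h : p = 1
    · subst h; simp
    · rw [if_neg (by omega : ¬ p - 1 = 0), if_neg (by omega : ¬ p = 2 * 0 + 1), zero_add]
      split_ifs with h2
      · rw [co_ev (by omega), if_neg (by omega)]
      · rfl
  | succ t ih =>
    intro p hp hpt
    rw [pow_succ', Module.End.mul_apply, co_ladInv hp, ih p hp (by omega),
      if_neg (by omega : ¬ p = 2 * t + 1), if_pos (by omega : 1 ≤ p),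
      ih (p - 1) (by omega) (by omega), if_neg (by omega : ¬ p - 1 = 2 * t + 1), zero_add, zero_add]
    by_cases h : p = 2 * (t + 1) + 1
    · rw [if_pos (by omega), if_pos h, ih (p - 2) (by omega) (by omega), if_pos (by omega)]
    · rw [if_neg h]
      split_ifs with h2
      · rw [ih (p - 2) (by omega) (by omega), if_neg (by omega)]
      · rfl

/-- For each data qubit `p` some image of `Y₀` under ladders has `Z`-part `Z₀` and an `X`-part
whose most distant qubit is `p`: an even `p` is reached forwards and an odd `p` backwards. -/
theorem exists_top {p : ℕ} (h4 : 4 ≤ p) (hp : p < n) : ∃ v : QState n,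
    Good 1 v (co 0) ∧ co p v = 1 ∧ ∀ q < n, p < q → co q v = 0 := by
  have hper : n ≤ period n := le_period
  rcases Nat.even_or_odd' p with ⟨t, rfl | rfl⟩
  · refine ⟨(lad n ^ t) (ev 0), ?_, ?_, ?_⟩
    · have h := good_fwd (n := n) (p := 0) (by omega) (t := t) (by omega)
      rwa [show co 0 ∘ₗ (ladInv n ^ t) = (co 0 : Module.Dual (ZMod 2) (QState n)) from
        LinearMap.ext fun x => co_zero_ladInv_pow (by omega) t x] at h
    · rw [co_lad_pow_top t _ hp le_rfl, if_pos rfl]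
    · intro q hq hpq
      rw [co_lad_pow_top t _ hq (by omega), if_neg (by omega)]
  · refine ⟨(ladInv n ^ (t + 1)) (ev 0), ?_, ?_, ?_⟩
    · have h := good_bwd (n := n) (p := 0) (by omega) (t := t + 1) (by omega)
      rwa [show co 0 ∘ₗ (lad n ^ (t + 1)) = (co 0 : Module.Dual (ZMod 2) (QState n)) from
        LinearMap.ext fun x => co_zero_lad_pow (by omega) (t + 1) x] at h
    · rw [co_ladInv_pow_top t _ hp le_rfl, if_pos rfl]
    · intro q hq hpq
      rw [co_ladInv_pow_top t _ hq (by omega), if_neg (by omega)]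

/-- The codes of the strings `Y₀ X₁^a X₂^b X₃^c`. -/
theorem exists_code (a b c : ZMod 2) : ∃ g ∈ [17, 19, 21, 23, 25, 27, 29, 31],
    b2z (g.testBit 0) = 1 ∧ b2z (g.testBit 1) = a ∧ b2z (g.testBit 2) = b ∧
      b2z (g.testBit 3) = c ∧ g.testBit 4 = true ∧ g.testBit 5 = false ∧ g.testBit 6 = false ∧
      g.testBit 7 = false ∧ g < 256 := by
  revert a b c; decide

/-- The string of `exists_top`, split into an ancilla string `Y₀ X^a` and an `X`-string `u` on the
data qubits. -/
theorem exists_top_code {p : ℕ} (h4 : 4 ≤ p) (hp : p < n) :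
    ∃ g ∈ [17, 19, 21, 23, 25, 27, 29, 31], ∃ u : QState n, g < 256 ∧ OffAnc u ∧
      Good 1 (ax g + u) (az g) ∧ co p u = 1 ∧ ∀ q < n, p < q → co q u = 0 := by
  obtain ⟨v, hv, hvp, hvq⟩ := exists_top h4 hp
  obtain ⟨g, hg, h0, h1, h2, h3, h4', h5, h6, h7, hlt⟩ := exists_code (co 1 v) (co 2 v) (co 3 v)
  have haz : (az g : Module.Dual (ZMod 2) (QState n)) = co 0 := by
    rw [az_eq, h4', h5, h6, h7]; simp
  have hax : ∀ q < n, 4 ≤ q → co q (ax g : QState n) = 0 := fun q hq hq4 => by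
    rw [co_ax hq, if_neg (by omega)]
  refine ⟨g, hg, ax g + v, hlt, ?_, ?_, ?_, ?_⟩
  · intro q hq
    rw [map_add, co_ax (by omega), if_pos hq]
    rcases lt_four_cases hq with rfl | rfl | rfl | rfl
    · rw [h0, hv.1]; decide
    · rw [h1, add_self_zmod2]
    · rw [h2, add_self_zmod2]
    · rw [h3, add_self_zmod2]
  · rw [← add_assoc, add_self_state, zero_add, haz]
    exact hv
  · rw [map_add, hax p hp h4, hvp, zero_add]
  · intro q hq hpq
    rw [map_add, hax q hq (by omega), hvq q hq hpq, zero_add]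

/-! ### Writing an arbitrary `X`-string on the data qubits -/

theorem oddY_of_good (hn : 4 ≤ n) {c d : ℕ} {w : QState n} (hw : OffAnc w)
    (h : Good c (ax d + w) (az d)) : oddY d = true := by
  have h1 := h.1
  rw [map_add, az_offAnc hw, add_zero, az_ax_self hn] at h1
  by_contra h2
  rw [Bool.not_eq_true] at h2
  rw [h2] at h1
  exact absurd h1 (by decide)

/-- The data qubits are treated one at a time, starting with the most distant one: a string of
`exists_top_code` switches the bit there, after the ancillas have been brought into a state in
which the two strings anticommute. This
costs at most six periods per qubit: four for the ancillas and two for the two quarter-turns. -/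
theorem good_exists (hn : 4 ≤ n) (k : ℕ) : 4 + k ≤ n → ∀ w : QState n, OffAnc w →
    (∀ p < n, 4 + k ≤ p → co p w = 0) → ∃ d < 256, Good (6 * k) (ax d + w) (az d) := by
  induction k with
  | zero =>
    intro _ w hw h
    have hw0 : w = 0 := state_ext fun p hp => by
      rw [map_zero]
      by_cases hp4 : p < 4
      · exact hw p hp4
      · exact h p hp (by omega)
    refine ⟨17, by norm_num, ?_⟩
    rw [hw0, add_zero]
    exact good_free hn 17 (by simp)
  | succ k ih =>
    intro hk w hw h
    rcases zmod2_cases (co (4 + k) w) with h0 | h1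
    · obtain ⟨d, hd, hG⟩ := ih (by omega) w hw fun p hp hkp => by
        rcases Nat.eq_or_lt_of_le hkp with rfl | hlt
        · exact h0
        · exact h p hp (by omega)
      exact ⟨d, hd, hG.mono (by omega)⟩
    · obtain ⟨g, hg, u, hg256, hu, hGu, hup, huq⟩ :=
        exists_top_code (n := n) (p := 4 + k) (by omega) (by omega)
      have hwu : OffAnc (w + u) := fun p hp => by rw [map_add, hw p hp, hu p hp, add_zero]
      obtain ⟨d, hd, hG⟩ := ih (by omega) (w + u) hwu fun p hp hkp => by
        rw [map_add]
        rcases Nat.eq_or_lt_of_le hkp with rfl | hlt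
        · rw [h1, hup]; decide
        · rw [h p hp (by omega), huq p hp (by omega), add_zero]
      obtain ⟨e, he, hT, hGe⟩ := sound_ball hn _ 2 d
        (ball_anti g hg d hd (oddY_of_good hn hwu hG)) hd _ _ hwu hG
      have hanti := testBit_maskOf hT
      refine ⟨e ^^^ g, Nat.xor_lt_two_pow (n := 8) he hg256, ?_⟩
      have hc := hGe.conj hGu (by
        rw [map_add, map_add, az_offAnc hu, az_offAnc hwu, add_zero, add_zero, az_ax_add hn,
          hanti, b2z_true])
      have e1 : ax e + (w + u) + (ax g + u) = ax (e ^^^ g) + w := by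
        rw [ax_xor, show ax e + (w + u) + (ax g + u) = ax e + ax g + w + (u + u) by abel,
          add_self_state, add_zero]
      rw [e1, ← az_xor] at hc
      exact hc.mono (by omega)

theorem ax_Y0 : (ax 17 : QState n) = ev 0 :=
  ax_eq fun p hp => by
    rw [co_ev hp]
    by_cases hp4 : p < 4
    · rcases lt_four_cases hp4 with rfl | rfl | rfl | rfl <;> decide
    · rw [if_neg hp4, if_neg (by omega)]

theorem az_Y0 : (az 17 : Module.Dual (ZMod 2) (QState n)) = co 0 := by
  rw [az_eq]; simp [Nat.testBit]

/-- All rotations about `Y₀ X^w`, with `w` supported on the data qubits, are reachable. -/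
theorem good_Y0 (hn : 4 ≤ n) {w : QState n} (hw : OffAnc w) :
    Good (6 * (n - 4) + 12) (ev 0 + w) (co 0) := by
  obtain ⟨d, hd, hG⟩ := good_exists hn (n - 4) (by omega) w hw fun p hp hp' => by omega
  obtain ⟨e, he, hT, hGe⟩ := sound_ball hn _ 6 d
    (ball_Y0 d hd (oddY_of_good hn hw hG)) hd _ _ hw hG
  have he17 : e = 17 := by
    rw [Nat.one_shiftLeft, Nat.testBit_two_pow] at hT
    exact (of_decide_eq_true hT).symm
  rw [he17, ax_Y0, az_Y0] at hGe
  exact hGe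

/-! ### The CNOT as a product of four rotations -/

/-- The commuting factors `J`, `J A`, `J B`, `J A B`, where `J² = -1` and `A`, `B` are commuting
involutions, generate the controlled operation `(1 + A + B - A B) / 2`. -/
theorem four_factors {R : Type*} [Ring R] {J A B : R} (hJ : J * J = -1) (hA : A * A = 1)
    (hB : B * B = 1) (hAJ : A * J = J * A) (hBJ : B * J = J * B) (hBA : B * A = A * B) :
    (1 + J) * (1 - J * A) * ((1 - J * B) * (1 + J * A * B)) = 2 * (1 + A + B - A * B) := by
  have hX : (1 + J) * (1 - J * A) = (1 + A) + J * (1 - A) := by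
    have : J * (J * A) = -A := by rw [← mul_assoc, hJ, neg_one_mul]
    simp only [add_mul, mul_sub, mul_one, one_mul, this]
    abel
  have hY : (1 - J * B) * (1 + J * A * B) = (1 + A) - J * (1 - A) * B := by
    have : J * B * (J * A * B) = -A := by
      calc J * B * (J * A * B) = J * (B * J) * A * B := by simp only [mul_assoc]
        _ = J * J * (B * A) * B := by rw [hBJ]; simp only [mul_assoc]
        _ = -(A * (B * B)) := by rw [hJ, hBA, neg_one_mul, neg_mul, mul_assoc]
        _ = -A := by rw [hB, mul_one]
    simp only [mul_add, sub_mul, mul_sub, mul_one, one_mul, this]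
    abel
  have c1 : (1 - A) * J = J * (1 - A) := by rw [sub_mul, mul_sub, hAJ, one_mul, mul_one]
  have c2 : (1 + A) * J = J * (1 + A) := by rw [add_mul, mul_add, hAJ, one_mul, mul_one]
  have s1 : (1 + A) * (1 - A) = 0 := by
    simp only [add_mul, mul_sub, mul_one, one_mul, hA]; abel
  have s2 : (1 - A) * (1 + A) = 0 := by
    simp only [sub_mul, mul_add, mul_one, one_mul, hA]; abel
  have s3 : (1 + A) * (1 + A) = 2 * (1 + A) := by
    rw [two_mul]; simp only [add_mul, mul_add, mul_one, one_mul, hA]; abel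
  have s4 : (1 - A) * (1 - A) = 2 * (1 - A) := by
    rw [two_mul]; simp only [sub_mul, mul_sub, mul_one, one_mul, hA]; abel
  have z1 : (1 + A) * (J * (1 - A) * B) = 0 := by
    rw [← mul_assoc, ← mul_assoc, c2, mul_assoc J, s1, mul_zero, zero_mul]
  have z2 : J * (1 - A) * (1 + A) = 0 := by rw [mul_assoc, s2, mul_zero]
  have z3 : J * (1 - A) * (J * (1 - A) * B) = -(2 * ((1 - A) * B)) := by
    calc J * (1 - A) * (J * (1 - A) * B) = J * ((1 - A) * J) * (1 - A) * B := by
          simp only [mul_assoc]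
      _ = J * J * ((1 - A) * (1 - A)) * B := by rw [c1]; simp only [mul_assoc]
      _ = -(2 * ((1 - A) * B)) := by rw [hJ, s4, neg_one_mul, neg_mul, mul_assoc]
  rw [hX, hY, add_mul, mul_sub (1 + A), mul_sub (J * (1 - A)), s3, z1, z2, z3]
  simp only [sub_mul, one_mul, mul_add, mul_sub]
  abel

theorem rot_pi_div_four (v : QState n) (φ : Module.Dual (ZMod 2) (QState n)) :
    rot (Real.pi / 4) v φ = ((Real.cos (Real.pi / 4) : ℝ) : ℂ) • (1 + pauli v φ) := by
  rw [rot, Real.sin_pi_div_four, Real.cos_pi_div_four, smul_add]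

theorem rot_neg_pi_div_four (v : QState n) (φ : Module.Dual (ZMod 2) (QState n)) :
    rot (-(Real.pi / 4)) v φ = ((Real.cos (Real.pi / 4) : ℝ) : ℂ) • (1 - pauli v φ) := by
  rw [rot, Real.cos_neg, Real.sin_neg, Real.sin_pi_div_four, Real.cos_pi_div_four, smul_sub,
    Complex.ofReal_neg, neg_smul, sub_eq_add_neg]

/-- The CNOT with control at distance `c` and target at distance `t` from the end, written with
four rotations on strings that contain the factor `Y₀`. -/
theorem cnot_eq_rots {c t : ℕ} (hc : c < n) (ht : t < n) (hc0 : c ≠ 0) (ht0 : t ≠ 0)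
    (hct : c ≠ t) :
    rot (Real.pi / 4) (ev 0 : QState n) (co 0) * rot (-(Real.pi / 4)) (ev 0) (co 0 + co c) *
      (rot (-(Real.pi / 4)) (ev 0 + ev t) (co 0) *
        rot (Real.pi / 4) (ev 0 + ev t) (co 0 + co c)) =
      mono (fun y => y + co c y • ev t) fun _ => 1 := by
  have h0 : 0 < n := by omega
  set J : QOp n := pauli (ev 0) (co 0) with hJ
  set A : QOp n := pauli 0 (co c) with hA
  set B : QOp n := pauli (ev t) 0 with hB
  have eA : pauli (ev 0 : QState n) (co 0 + co c) = J * A := by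
    rw [hJ, hA, pauli_mul]; simp
  have eB : pauli (ev 0 + ev t : QState n) (co 0) = J * B := by
    rw [hJ, hB, pauli_mul, co_ev h0, if_neg ht0.symm]; simp
  have eAB : pauli (ev 0 + ev t : QState n) (co 0 + co c) = J * A * B := by
    rw [← eA, hB, pauli_mul, LinearMap.add_apply, co_ev h0, co_ev hc, if_neg ht0.symm, if_neg hct]
    simp
  have hAB : A * B = pauli (ev t) (co c) := by
    rw [hA, hB, pauli_mul, co_ev hc, if_neg hct]; simp
  have hBA : B * A = A * B := by
    rw [hAB, hA, hB, pauli_mul]; simp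
  have hJJ : J * J = -1 := by rw [hJ, pauli_sq, co_ev h0]; simp
  have hAA : A * A = 1 := by rw [hA, pauli_sq]; simp
  have hBB : B * B = 1 := by rw [hB, pauli_sq]; simp
  have hAJ : A * J = J * A := by
    rw [← eA, hA, hJ, pauli_mul, co_ev hc, if_neg hc0, add_comm (co c)]; simp
  have hBJ : B * J = J * B := by
    rw [← eB, hB, hJ, pauli_mul, add_comm (ev t)]; simp
  rw [rot_pi_div_four, rot_neg_pi_div_four, rot_neg_pi_div_four, rot_pi_div_four, eA, eB, eAB,
    smul_mul_smul_comm, smul_mul_smul_comm, smul_mul_smul_comm,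
    four_factors hJJ hAA hBB hAJ hBJ hBA]
  have hcos : ((Real.cos (Real.pi / 4) : ℝ) : ℂ) * ((Real.cos (Real.pi / 4) : ℝ) : ℂ) = 1 / 2 := by
    rw [← Complex.ofReal_mul, Real.cos_pi_div_four, div_mul_div_comm,
      Real.mul_self_sqrt (by norm_num)]
    push_cast; norm_num
  rw [hcos, hAB, hA, hB]
  ext x y
  rw [two_mul]
  simp only [Matrix.smul_apply, Matrix.add_apply, Matrix.sub_apply, pauli, mono, Matrix.of_apply,
    Matrix.one_apply, smul_eq_mul, add_zero, LinearMap.zero_apply, sgn_zero]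
  rcases zmod2_cases (co c y) with h | h
  · simp only [h, sgn_zero, zero_smul, add_zero]
    ring
  · simp only [h, sgn_one, one_smul]
    split_ifs <;> norm_num

theorem ev_eq_single {N : ℕ} (i : Fin N) :
    (ev (N + 3 - (i : ℕ)) : QState (N + 4)) = Pi.single (Fin.castAdd 4 i) 1 := by
  rw [← single_eq_ev (by omega)]
  congr 1
  ext
  simp only [Fin.val_castAdd]
  omega

theorem co_eq_castAdd {N : ℕ} (i : Fin N) (y : QState (N + 4)) :
    co (N + 3 - (i : ℕ)) y = y (Fin.castAdd 4 i) := by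
  rw [co_apply (by omega)]
  congr 1
  ext
  simp only [Fin.val_castAdd]
  omega

theorem embed_cnot {N : ℕ} (c t : Fin N) :
    embed N 4 (CNOTg c t) =
      mono (fun y => y + co (N + 3 - (c : ℕ)) y • ev (N + 3 - (t : ℕ))) fun _ => 1 := by
  ext x y
  simp only [embed, CNOTg, mono, Matrix.of_apply]
  rw [ev_eq_single, co_eq_castAdd, mul_ite, mul_one, mul_zero, ← ite_and]
  refine if_congr ⟨fun h => ?_, fun h => ⟨?_, ?_⟩⟩ rfl rfl
  · ext i
    refine Fin.addCases (fun j => ?_) (fun j => ?_) i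
    · have := congrFun h.2 j
      rw [this]
      by_cases hj : j = t
      · subst hj; simp
      · simp [hj, Function.update_of_ne]
    · rw [h.1 j]
      have : Fin.natAdd N j ≠ Fin.castAdd 4 t := by
        intro h'
        have := congrArg Fin.val h'
        simp only [Fin.val_natAdd, Fin.val_castAdd] at this
        omega
      simp [this]
  · intro j
    have : Fin.natAdd N j ≠ Fin.castAdd 4 t := by
      intro h'
      have := congrArg Fin.val h'
      simp only [Fin.val_natAdd, Fin.val_castAdd] at this
      omega
    rw [h]
    simp [this]
  · ext j
    rw [h]
    by_cases hj : j = t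
    · subst hj; simp
    · simp [hj, Function.update_of_ne]

theorem offAnc_ev {p : ℕ} (hn : 4 ≤ n) (hp : 4 ≤ p) : OffAnc (ev p : QState n) := fun q hq => by
  rw [co_ev (by omega), if_neg (by omega)]

/-- The CNOT between two data qubits is reachable; the three factors that cost ladder periods come
from `good_Y0`. -/
theorem reach_cnot {c t : ℕ} (hc : c < n) (ht : t < n) (hc4 : 4 ≤ c) (ht4 : 4 ≤ t) (hct : c ≠ t) :
    Reach (3 * (6 * (n - 4) + 12) * period n)
      (mono (fun y : QState n => y + co c y • ev t) fun _ => 1) := by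
  have hn : 4 ≤ n := by omega
  have wc : OffAnc (ev c : QState n) := offAnc_ev hn hc4
  have wt : OffAnc (ev t : QState n) := offAnc_ev hn ht4
  have wct : OffAnc (ev t + ev c : QState n) := fun q hq => by rw [map_add, wt q hq, wc q hq, add_zero]
  have h1 : Good 0 (ev 0 : QState n) (co 0) := good_Y (by omega)
  have h2 : Good (6 * (n - 4) + 12) (ev 0 : QState n) (co 0 + co c) := by
    have h := (good_Y0 hn wc).conj (good_Y hc) (by
      rw [wc 0 (by omega), map_add, co_ev hc, co_ev hc, if_neg (by omega), if_pos rfl]; decide)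
    rwa [add_assoc (ev 0), add_self_state, add_zero] at h
  have h3 := good_Y0 hn wt
  have h4 : Good (6 * (n - 4) + 12) (ev 0 + ev t : QState n) (co 0 + co c) := by
    have h := (good_Y0 hn wct).conj (good_Y hc) (by
      rw [wc 0 (by omega), map_add, map_add, co_ev hc, co_ev hc, co_ev hc, if_neg (by omega),
        if_neg hct, if_pos rfl]
      decide)
    rwa [← add_assoc, add_assoc (ev 0 + ev t), add_self_state, add_zero] at h
  rw [← cnot_eq_rots hc ht (by omega) (by omega) hct]
  have := ((h1.2 (Real.pi / 4)).mul (h2.2 (-(Real.pi / 4)))).mul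
    ((h3.2 (-(Real.pi / 4))).mul (h4.2 (Real.pi / 4)))
  convert this using 1
  ring

end

end RyCNOT

/-- for every `N ≥ 2` and distinct 1-based qubits `k, l ∈ {1,…,N}`
(qubit `q` ↦ index `q−1`), there are a depth `M ≤ 96·N² + 400·N − 400` and angles such that
the `(N+4)`-qubit depth-`M` Ry-CNOT ansatz equals exactly `CNOT_{k,l}` on qubits `1,…,N`
tensored with the identity on the four ancilla qubits. -/
theorem CNOT_in_ansatzY (N : ℕ) (hN : 2 ≤ N) (k l : ℕ)
    (hk1 : 1 ≤ k) (hk2 : k ≤ N) (hl1 : 1 ≤ l) (hl2 : l ≤ N) (hkl : k ≠ l) :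
    ∃ M : ℕ, (M : ℤ) ≤ 96 * (N : ℤ) ^ 2 + 400 * (N : ℤ) - 400 ∧
      ∃ α : ℕ → Fin (N + 4) → ℝ,
        ansatzY (N + 4) α M =
          embed N 4 (CNOTg (⟨k - 1, by omega⟩ : Fin N) ⟨l - 1, by omega⟩) := by
  obtain ⟨α, hα⟩ := RyCNOT.reach_cnot (n := N + 4) (c := N + 3 - (k - 1)) (t := N + 3 - (l - 1))
    (by omega) (by omega) (by omega) (by omega) (by omega)
  refine ⟨_, ?_, α, hα.trans (RyCNOT.embed_cnot ⟨k - 1, by omega⟩ ⟨l - 1, by omega⟩).symm⟩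
  have hp : RyCNOT.period (N + 4) ≤ 2 * (N + 4 - 1) := RyCNOT.period_le (by omega)
  have h1 : 3 * (6 * (N + 4 - 4) + 12) * RyCNOT.period (N + 4) ≤
      3 * (6 * (N + 4 - 4) + 12) * (2 * (N + 4 - 1)) := Nat.mul_le_mul_left _ hp
  have h2 : N + 4 - 4 = N := by omega
  have h3 : N + 4 - 1 = N + 3 := by omega
  rw [h2, h3] at h1
  rw [h2]
  zify at h1 hN ⊢
  -- The depth is at most `(18 N + 36) (2 N + 6) = 36 N² + 180 N + 216`.
  nlinarith
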